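/- arXiv:math/0702114 — 3 statements merged into one kernel-verified Lean document; each statement's English description precedes it below -/
import Mathlib

section
/- For every pair of indices 1 ≤ i < j ≤ 6, the set of points of ℙ³(ℂ) represented by x ∈ ℂ⁴∖{0} with Fᵢ(x) = Fⱼ(x) = S(x) = 0 has exactly 2 elements (each line Fᵢ = Fⱼ = 0 meets the quadric S = 0 in exactly two points). -/
/-!
Project the quadric `y₀ y₁ = y₂ y₃` from the point `[0, 0, 1, -1]`, which does not lie on it, by
`y ↦ [y₀, y₁, y₂ + y₃]`. This is a double cover of the plane: over `[a, b, s]` lie the points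
`[a, b, u, v]` with `u + v = s` and `u v = a b`, so the branch curve is the conic `s² = 4 a b`.
Each plane `Fᵢ = 0` passes through the centre of projection, hence is the preimage of a line `ℓᵢ`,
and `Fᵢ = Fⱼ = S = 0` is the fibre over the point `ℓᵢ ∩ ℓⱼ`, whose coordinates are a cross product.
None of the fifteen points `ℓᵢ ∩ ℓⱼ` lies on the branch conic.
-/

open MvPolynomial

/-- The quadric `S = y₀·y₁ − y₂·y₃`. -/
noncomputable def polyS : MvPolynomial (Fin 4) ℂ := X 0 * X 1 - X 2 * X 3

/-- The six linear forms `F₁, …, F₆` (indexed by `Fin 6`). -/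
noncomputable def polyF : Fin 6 → MvPolynomial (Fin 4) ℂ :=
  ![X 0,
    X 1,
    4 * X 0 - 2 * X 2 - 2 * X 3 + X 1,
    X 0 - 2 * X 2 - 2 * X 3 + 4 * X 1,
    X 0 + X 2 + X 3 + X 1,
    X 0 - X 2 - X 3 + X 1]

section QuadricFiber

open Projectivization
open scoped LinearAlgebra.Projectivization Matrix

variable {K : Type*} [Field K]

/-- The projection of projective three-space onto the plane from the centre `[0, 0, 1, -1]`, in
homogeneous coordinates; it sends the centre itself to `0`. -/
def planeProj (x : Fin 4 → K) : Fin 3 → K := ![x 0, x 1, x 2 + x 3]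

/-- The fibre over `[n]` of the projection `planeProj` restricted to the quadric `y₀ y₁ = y₂ y₃`.
The scalar `t` may vanish; this adds no point, as the centre is not on the quadric. -/
def quadricFiber (n : Fin 3 → K) : Set (ℙ K (Fin 4 → K)) :=
  {p | ∃ (x : Fin 4 → K) (hx : x ≠ 0), mk K x hx = p ∧
    (∃ t : K, planeProj x = t • n) ∧ x 0 * x 1 = x 2 * x 3}

/-- The equation `s² = 4 a b` of the branch conic of `planeProj` on the quadric: the discriminant of
`T² - s T + a b`, whose roots are the last two coordinates of the points over `[a, b, s]`. -/
def branchForm (n : Fin 3 → K) : K := n 2 ^ 2 - 4 * (n 0 * n 1)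

theorem vec4_ne_zero_of_ne (a b : K) {u v : K} (huv : u ≠ v) : ![a, b, u, v] ≠ 0 := by
  intro h
  have hu : u = 0 := congrFun h 2
  have hv : v = 0 := congrFun h 3
  exact huv (hu.trans hv.symm)

theorem mk_ne_mk_swap {a b u v : K} (hprod : a * b = u * v) (huv : u ≠ v) :
    mk K ![a, b, u, v] (vec4_ne_zero_of_ne a b huv) ≠
      mk K ![a, b, v, u] (vec4_ne_zero_of_ne a b huv.symm) := by
  rw [Ne, mk_eq_mk_iff']
  rintro ⟨k, hk⟩
  have ha : k * a = a := congrFun hk 0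
  have hv : k * v = u := congrFun hk 2
  have hu : k * u = v := congrFun hk 3
  by_cases ha0 : a = 0
  · have huv0 : u * v = 0 := by rw [← hprod, ha0, zero_mul]
    rcases mul_eq_zero.mp huv0 with rfl | rfl
    · exact huv (by rw [← hu, mul_zero])
    · exact huv (by rw [← hv, mul_zero])
  · have hk1 : k = 1 := mul_right_cancel₀ ha0 (by rw [ha, one_mul])
    exact huv (by rw [← hu, hk1, one_mul])

theorem eq_smul_or_eq_smul_swap {x : Fin 4 → K} {a b u v t : K} (hprod : a * b = u * v)
    (hx : planeProj x = t • ![a, b, u + v]) (hS : x 0 * x 1 = x 2 * x 3) :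
    x = t • ![a, b, u, v] ∨ x = t • ![a, b, v, u] := by
  have h₀ : x 0 = t * a := congrFun hx 0
  have h₁ : x 1 = t * b := congrFun hx 1
  have hsum : x 2 + x 3 = t * (u + v) := congrFun hx 2
  have hroot : (x 2 - t * u) * (x 2 - t * v) = 0 := by
    rw [h₀, h₁] at hS
    linear_combination x 2 * hsum + hS - t ^ 2 * hprod
  rcases mul_eq_zero.mp hroot with h₂ | h₂
  · left
    have h₃ : x 3 = t * v := by linear_combination hsum - h₂
    ext i
    fin_cases i
    exacts [h₀, h₁, sub_eq_zero.mp h₂, h₃]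
  · right
    have h₃ : x 3 = t * u := by linear_combination hsum - h₂
    ext i
    fin_cases i
    exacts [h₀, h₁, sub_eq_zero.mp h₂, h₃]

theorem mk_mem_quadricFiber {a b u v : K} (hprod : a * b = u * v) (h : ![a, b, u, v] ≠ 0) :
    mk K ![a, b, u, v] h ∈ quadricFiber ![a, b, u + v] :=
  ⟨_, h, rfl, ⟨1, (one_smul K _).symm⟩, hprod⟩

theorem quadricFiber_eq_pair {a b u v : K} (hprod : a * b = u * v) (huv : u ≠ v) :
    quadricFiber ![a, b, u + v] =
      {mk K ![a, b, u, v] (vec4_ne_zero_of_ne a b huv),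
        mk K ![a, b, v, u] (vec4_ne_zero_of_ne a b huv.symm)} := by
  apply Set.Subset.antisymm
  · rintro _ ⟨x, hx, rfl, ⟨t, ht⟩, hS⟩
    simp only [Set.mem_insert_iff, Set.mem_singleton_iff, mk_eq_mk_iff']
    exact (eq_smul_or_eq_smul_swap hprod ht hS).imp (fun h ↦ ⟨t, h.symm⟩) (fun h ↦ ⟨t, h.symm⟩)
  · rintro _ (rfl | rfl)
    · exact mk_mem_quadricFiber hprod _
    · rw [add_comm u v]
      exact mk_mem_quadricFiber (hprod.trans (mul_comm u v)) _

theorem exists_add_eq_and_mul_eq [IsAlgClosed K] (s p : K) :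
    ∃ u v : K, u + v = s ∧ u * v = p := by
  have hdeg : (Polynomial.C 1 * Polynomial.X ^ 2 + Polynomial.C (-s) * Polynomial.X +
      Polynomial.C p).degree ≠ 0 := by
    rw [Polynomial.degree_quadratic one_ne_zero]
    exact two_ne_zero
  obtain ⟨u, hu⟩ := IsAlgClosed.exists_root _ hdeg
  have hroot : u * u - s * u + p = 0 := by
    simp only [Polynomial.IsRoot.def, Polynomial.eval_add, Polynomial.eval_mul,
      Polynomial.eval_C, Polynomial.eval_pow, Polynomial.eval_X] at hu
    linear_combination hu
  obtain ⟨v, -, hsum, hprod⟩ := vieta_formula_quadratic hroot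
  exact ⟨u, v, hsum, hprod⟩

theorem ncard_quadricFiber [IsAlgClosed K] {n : Fin 3 → K} (hn : branchForm n ≠ 0) :
    (quadricFiber n).ncard = 2 := by
  obtain ⟨u, v, hsum, hprod⟩ := exists_add_eq_and_mul_eq (n 2) (n 0 * n 1)
  have huv : u ≠ v := by
    rintro rfl
    exact hn (by rw [branchForm, ← hsum, ← hprod]; ring)
  have hcoord : n = ![n 0, n 1, u + v] := by
    rw [hsum]
    exact (FinVec.etaExpand_eq n).symm
  rw [hcoord, quadricFiber_eq_pair hprod.symm huv, Set.ncard_pair (mk_ne_mk_swap hprod.symm huv)]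

theorem dotProduct_eq_zero_and_iff_exists_eq_smul_cross {v w : Fin 3 → K} (hvw : v ⨯₃ w ≠ 0)
    (z : Fin 3 → K) : v ⬝ᵥ z = 0 ∧ w ⬝ᵥ z = 0 ↔ ∃ t : K, z = t • (v ⨯₃ w) := by
  constructor
  · rintro ⟨hv, hw⟩
    have hcross : v ⨯₃ w ⨯₃ z = 0 := by
      rw [cross_cross_eq_smul_sub_smul, hv, hw, zero_smul, zero_smul, sub_zero]
    have hdep : ¬LinearIndependent K ![v ⨯₃ w, z] :=
      fun h ↦ crossProduct_ne_zero_iff_linearIndependent.mpr h hcross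
    rw [LinearIndependent.pair_iff' hvw, not_forall_not] at hdep
    exact hdep.imp fun _ ↦ Eq.symm
  · rintro ⟨t, rfl⟩
    rw [dotProduct_smul, dotProduct_smul, dot_self_cross, dot_cross_self, smul_zero]
    exact ⟨rfl, rfl⟩

theorem branchForm_cross (v w : Fin 3 → K) :
    branchForm (v ⨯₃ w) = (v 0 * w 1 - v 1 * w 0) ^ 2 -
      4 * ((v 1 * w 2 - v 2 * w 1) * (v 2 * w 0 - v 0 * w 2)) := by
  rw [branchForm, cross_apply]
  rfl

theorem ncard_planes_inter_quadric [IsAlgClosed K] {v w : Fin 3 → K}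
    (hvw : branchForm (v ⨯₃ w) ≠ 0) :
    {p : ℙ K (Fin 4 → K) | ∃ (x : Fin 4 → K) (hx : x ≠ 0), mk K x hx = p ∧
      v ⬝ᵥ planeProj x = 0 ∧ w ⬝ᵥ planeProj x = 0 ∧ x 0 * x 1 = x 2 * x 3}.ncard = 2 := by
  have hne : v ⨯₃ w ≠ 0 := by
    intro h
    simp [h, branchForm] at hvw
  simpa only [quadricFiber, ← dotProduct_eq_zero_and_iff_exists_eq_smul_cross hne, and_assoc]
    using ncard_quadricFiber hvw

end QuadricFiber

section SixPlanes

open scoped Matrix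

/-- The line `ℓᵢ` in the plane, given by its coefficient vector, of which the plane `Fᵢ = 0` is the
preimage under `planeProj`. -/
def lineCoeff : Fin 6 → Fin 3 → ℂ :=
  ![![1, 0, 0], ![0, 1, 0], ![4, 1, -2], ![1, 4, -2], ![1, 1, 1], ![1, 1, -1]]

theorem eval_polyF (i : Fin 6) (x : Fin 4 → ℂ) :
    eval x (polyF i) = lineCoeff i ⬝ᵥ planeProj x := by
  fin_cases i <;> simp [polyF, lineCoeff, planeProj] <;> ring

theorem eval_polyS_eq_zero_iff (x : Fin 4 → ℂ) :
    eval x polyS = 0 ↔ x 0 * x 1 = x 2 * x 3 := by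
  simp only [polyS, map_sub, map_mul, eval_X, sub_eq_zero]

theorem branchForm_cross_lineCoeff_ne_zero {i j : Fin 6} (hij : i < j) :
    branchForm (lineCoeff i ⨯₃ lineCoeff j) ≠ 0 := by
  fin_cases i <;> fin_cases j <;>
    first
    | exact absurd hij (by decide)
    | simp [branchForm_cross, lineCoeff] <;> norm_num

end SixPlanes

/-- Each line `Fᵢ = Fⱼ = 0` (for `i < j`) meets the quadric `S = 0` in exactly two
points of `ℙ³(ℂ)`. -/
theorem line_meets_quadric_in_two_points (i j : Fin 6) (hij : i < j) :
    {p : Projectivization ℂ (Fin 4 → ℂ) |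
      ∃ (x : Fin 4 → ℂ) (hx : x ≠ 0), Projectivization.mk ℂ x hx = p ∧
        eval x (polyF i) = 0 ∧ eval x (polyF j) = 0 ∧ eval x polyS = 0}.ncard = 2 := by
  simp only [eval_polyF, eval_polyS_eq_zero_iff]
  exact ncard_planes_inter_quadric (branchForm_cross_lineCoeff_ne_zero hij)
end

section
/- The polynomial S¹⁰ belongs to the Jacobian ideal of B₆, i.e. S¹⁰ lies in the ideal of ℂ[y₀,y₁,y₂,y₃] generated by the four partial derivatives ∂B₆/∂y₀, ∂B₆/∂y₁, ∂B₆/∂y₂, ∂B₆/∂y₃. In particular, every x ∈ ℂ⁴∖{0} at which all four partial derivatives of B₆ vanish satisfies S(x) = 0. -/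
open MvPolynomial

/-- The sextic `B₆ = F₁·F₂·F₃·F₄·F₅·F₆ − S³`. -/
noncomputable def polyB6 : MvPolynomial (Fin 4) ℂ := (∏ i : Fin 6, polyF i) - polyS ^ 3

/-!
On the plane `y₂ = y₃` the lines `Fᵢ = 0` are tangent to the conic `S = 0`, at the points with
parameters `∞, 0, 2, 1/2, -1, 1`. These form a regular hexagon up to projectivity, since
`t ↦ (t + 1) / (2 - t)` permutes them cyclically. Let `p`, `r` be the tangent forms at the two fixed
points of this map, the roots of `t² - t + 1`, and let `v` be a form defining the polar line. Then
`27 ∏ Fᵢ = (v³ - 3vpr)² - (p³ + r³)²` and `12 S = v² - 4pr + 3(y₂ - y₃)²`.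
In these coordinates the partial derivatives of the restricted sextic yield binary forms of degrees
`5` and `3` in `pr` and `v²` without common zero. They generate all forms of degree `7 = 5 + 3 - 1`,
among them `(v² - 4pr)⁷`, so `S⁷` lies in `J + (y₂ - y₃)`, where `J` is the Jacobian ideal.
As `∏ Fᵢ` depends on `y₂` and `y₃` only through their sum, `S² (y₂ - y₃)` lies in `J`;
hence so does `S² · S⁷`.
-/

section JacobianIdeal

variable {σ R : Type*} [CommSemiring R] {f g : MvPolynomial σ R}

/-- The Jacobian ideal of `f`, generated by all its partial derivatives (and not by `f` itself). -/
noncomputable def jacobianIdeal (f : MvPolynomial σ R) : Ideal (MvPolynomial σ R) :=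
  Ideal.span (Set.range fun i => pderiv i f)

theorem pderiv_mem_jacobianIdeal (i : σ) : pderiv i f ∈ jacobianIdeal f :=
  Ideal.subset_span ⟨i, rfl⟩

theorem derivation_mem_jacobianIdeal (D : Derivation R (MvPolynomial σ R) (MvPolynomial σ R)) :
    D f ∈ jacobianIdeal f := by
  classical
  have sum_apply (g : MvPolynomial σ R) :
      (∑ i ∈ f.vars, D (X i) • pderiv i) g = ∑ i ∈ f.vars, D (X i) * pderiv i g :=
    (congrFun (map_sum (Derivation.coeFnAddMonoidHom (R := R) (A := MvPolynomial σ R)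
      (M := MvPolynomial σ R)) _ _) g).trans (Finset.sum_apply _ _ _)
  have chain_rule : D f = ∑ i ∈ f.vars, D (X i) * pderiv i f := by
    rw [← sum_apply]
    refine derivation_eq_of_forall_mem_vars fun j hj => ?_
    simp [sum_apply, pderiv_X, Pi.single_apply, hj]
  rw [chain_rule]
  exact Ideal.sum_mem _ fun i _ => Ideal.mul_mem_left _ _ (pderiv_mem_jacobianIdeal i)

theorem eval_eq_zero_of_mem_jacobianIdeal {x : σ → R} (hx : ∀ i, eval x (pderiv i f) = 0)
    (hg : g ∈ jacobianIdeal f) : eval x g = 0 := by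
  have hle : jacobianIdeal f ≤ RingHom.ker (eval x) :=
    Ideal.span_le.2 <| Set.range_subset_iff.2 hx
  exact hle hg

end JacobianIdeal

section CommRing

variable {A B : Type*} [CommRing A] [CommRing B]

theorem derivation_ofNat [Algebra A B] (D : Derivation A B B) (n : ℕ) [n.AtLeastTwo] :
    D ofNat(n) = 0 :=
  D.map_natCast n

theorem mem_of_natCast_mul_mem [Algebra ℚ A] {I : Ideal A} {n : ℕ} {x : A} (hn : n ≠ 0)
    (hx : n * x ∈ I) : x ∈ I := by
  have hunit : IsUnit (n : A) := by
    simpa using (IsUnit.mk0 (n : ℚ) (Nat.cast_ne_zero.2 hn)).map (algebraMap ℚ A)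
  exact (I.unit_mul_mem_iff_mem hunit).1 hx

theorem mul_mem_of_mem_span_singleton_sup {I : Ideal A} {d x y : A}
    (hx : x ∈ Ideal.span {d} ⊔ I) (hd : y * d ∈ I) : y * x ∈ I := by
  obtain ⟨c, j, hj, rfl⟩ := Ideal.mem_span_singleton_sup.1 hx
  rw [mul_add, mul_left_comm]
  exact I.add_mem (I.mul_mem_left c hd) (I.mul_mem_left y hj)

/-- `α` and `β` are the two roots of `t² - t + 1`, the sixth cyclotomic polynomial. Vieta's formulas
express this symmetrically in `α` and `β`. -/
structure IsConjSixthRootPair (α β : A) : Prop where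
  add_eq_one : α + β = 1
  mul_eq_one : α * β = 1

namespace IsConjSixthRootPair

variable {α β : A}

theorem symm (h : IsConjSixthRootPair α β) : IsConjSixthRootPair β α :=
  ⟨(add_comm β α).trans h.add_eq_one, (mul_comm β α).trans h.mul_eq_one⟩

theorem map (h : IsConjSixthRootPair α β) (φ : A →+* B) : IsConjSixthRootPair (φ α) (φ β) :=
  ⟨by rw [← map_add, h.add_eq_one, map_one], by rw [← map_mul, h.mul_eq_one, map_one]⟩

theorem prod_eq_sum_cubes_sub (h : IsConjSixthRootPair α β) (x p r : A) :
    (x + p + r) * (x - α * p - β * r) * (x - β * p - α * r) =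
      x ^ 3 + p ^ 3 + r ^ 3 - 3 * x * p * r := by
  linear_combination
    (x + p + r) * (((α + β + 1) * p * r - x * (p + r)) * h.add_eq_one + (p - r) ^ 2 * h.mul_eq_one)

end IsConjSixthRootPair

theorem exists_isConjSixthRootPair : ∃ α β : ℂ, IsConjSixthRootPair α β := by
  obtain ⟨z, hz⟩ := IsAlgClosed.exists_pow_nat_eq (-3 : ℂ) two_pos
  exact ⟨(1 + z) / 2, (1 - z) / 2, by ring, by linear_combination -hz / 4⟩

theorem sq_mul_mul_pow_eq {a p r k : A} {n : ℕ} (hp : a * p ^ n + r * k = 0)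
    (hr : a * r ^ n + p * k = 0) : a ^ 2 * (p * r) ^ n = p * r * k ^ 2 := by
  rw [mul_pow]
  linear_combination a * r ^ n * hp - r * k * hr

-- The multipliers solve an `8 × 8` linear system: the forms of degree `7` in `m` and `V` are
-- spanned by the multiples of the two given forms.
theorem mul_sub_pow_seven_eq_zero {m V : A}
    (hm : 4 * m ^ 5 = m * (m ^ 2 - 22 * m * V + 31 * V ^ 2) ^ 2)
    (hV : V * (11 * m ^ 2 - 62 * m * V + 63 * V ^ 2) = 0) :
    1071 * (m - V) ^ 7 = 0 := by
  linear_combination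
    (357 * m ^ 2 - 2554 * m * V + 2767 * V ^ 2) * hm +
      (-1413 * m ^ 4 + 21262 * m ^ 3 * V - 57582 * m ^ 2 * V ^ 2 + 42310 * m * V ^ 3 -
        17 * V ^ 4) * hV

-- The hypotheses are, up to scalars, the partial derivatives of
-- `64 * ((v ^ 3 - 3 * v * p * r) ^ 2 - (p ^ 3 + r ^ 3) ^ 2) - (v ^ 2 - 4 * p * r) ^ 3`.
theorem mul_sq_sub_pow_seven_eq_zero {p r v : A}
    (hp : 32 * p ^ 5 + r * (16 * (p * r) ^ 2 - 88 * (p * r) * v ^ 2 + 31 * v ^ 4) = 0)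
    (hr : 32 * r ^ 5 + p * (16 * (p * r) ^ 2 - 88 * (p * r) * v ^ 2 + 31 * v ^ 4) = 0)
    (hv : v * (176 * (p * r) ^ 2 - 248 * (p * r) * v ^ 2 + 63 * v ^ 4) = 0) :
    1071 * (v ^ 2 - 4 * (p * r)) ^ 7 = 0 := by
  have elim := mul_sub_pow_seven_eq_zero (m := 4 * (p * r)) (V := v ^ 2)
    (by linear_combination 4 * sq_mul_mul_pow_eq hp hr) (by linear_combination v * hv)
  linear_combination -elim

end CommRing

/-- The form `z² y₀ - z (y₂ + y₃) + y₁`, which on the plane `y₂ = y₃` cuts out the tangent line to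
the conic `S = 0` at its point with parameter `z`. -/
noncomputable def tangentForm (z : ℂ) : MvPolynomial (Fin 4) ℂ :=
  C z ^ 2 * X 0 - C z * (X 2 + X 3) + X 1

/-- On the plane `y₂ = y₃`, the polar line with respect to the conic `S = 0` of the intersection of
the tangents `tangentForm α` and `tangentForm β`, for `IsConjSixthRootPair α β`. -/
noncomputable def polarForm : MvPolynomial (Fin 4) ℂ := 2 * X 0 + 2 * X 1 - X 2 - X 3

/-- For `IsConjSixthRootPair α β`, this is `3 ∂/∂p` in the coordinates `p = tangentForm α`,
`r = tangentForm β`, `v = polarForm`, `d = y₂ - y₃`. -/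
noncomputable def tangentDerivation (α β : ℂ) :
    Derivation ℂ (MvPolynomial (Fin 4) ℂ) (MvPolynomial (Fin 4) ℂ) :=
  mkDerivation ℂ ![-1, C α, -C β, -C β]

/-- This is `6 ∂/∂v` in the coordinates used for `tangentDerivation`. -/
noncomputable def polarDerivation :
    Derivation ℂ (MvPolynomial (Fin 4) ℂ) (MvPolynomial (Fin 4) ℂ) :=
  mkDerivation ℂ ![2, 2, 1, 1]

section HexagonCoordinates

variable {α β : ℂ}

theorem prod_polyF_eq (h : IsConjSixthRootPair α β) :
    27 * ∏ i, polyF i =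
      (polarForm ^ 3 - 3 * polarForm * (tangentForm α * tangentForm β)) ^ 2 -
        (tangentForm α ^ 3 + tangentForm β ^ 3) ^ 2 := by
  obtain ⟨hadd, hmul⟩ := h.map (C : ℂ →+* MvPolynomial (Fin 4) ℂ)
  set v := polarForm
  set p := tangentForm α
  set r := tangentForm β
  have hF₁ : v - p - r = 3 * X 0 := by grind [polarForm, tangentForm]
  have hF₂ : v + C α * p + C β * r = 3 * X 1 := by grind [polarForm, tangentForm]
  have hF₃ : v - C α * p - C β * r = 4 * X 0 - 2 * X 2 - 2 * X 3 + X 1 := by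
    grind [polarForm, tangentForm]
  have hF₄ : v + p + r = X 0 - 2 * X 2 - 2 * X 3 + 4 * X 1 := by
    grind [polarForm, tangentForm]
  have hF₅ : v - C β * p - C α * r = X 0 + X 2 + X 3 + X 1 := by
    grind [polarForm, tangentForm]
  have hF₆ : v + C β * p + C α * r = 3 * (X 0 - X 2 - X 3 + X 1) := by
    grind [polarForm, tangentForm]
  calc
    27 * ∏ i, polyF i =
        ((v + p + r) * (v - C α * p - C β * r) * (v - C β * p - C α * r)) *
          ((v + -p + -r) * (v - C α * -p - C β * -r) * (v - C β * -p - C α * -r)) := by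
      simp only [mul_neg, sub_neg_eq_add, ← sub_eq_add_neg, hF₁, hF₂, hF₃, hF₄, hF₅, hF₆, polyF,
        Fin.prod_univ_six, Matrix.cons_val]
      ring
    _ = (v ^ 3 - 3 * v * (p * r)) ^ 2 - (p ^ 3 + r ^ 3) ^ 2 := by
      rw [(h.map C).prod_eq_sum_cubes_sub, (h.map C).prod_eq_sum_cubes_sub]
      ring

theorem polyS_eq (h : IsConjSixthRootPair α β) :
    12 * polyS =
      polarForm ^ 2 - 4 * (tangentForm α * tangentForm β) + 3 * (X 2 - X 3) ^ 2 := by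
  obtain ⟨hadd, hmul⟩ := h.map (C : ℂ →+* MvPolynomial (Fin 4) ℂ)
  grind [polyS, polarForm, tangentForm]

theorem derivation_polyB6 (D : Derivation ℂ (MvPolynomial (Fin 4) ℂ) (MvPolynomial (Fin 4) ℂ))
    (h : IsConjSixthRootPair α β) :
    9 * D polyB6 =
      2 * (polarForm ^ 3 - 3 * polarForm * (tangentForm α * tangentForm β)) *
          ((polarForm ^ 2 - tangentForm α * tangentForm β) * D polarForm -
            polarForm * (tangentForm α * D (tangentForm β) + tangentForm β * D (tangentForm α))) -
        2 * (tangentForm α ^ 3 + tangentForm β ^ 3) *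
          (tangentForm α ^ 2 * D (tangentForm α) + tangentForm β ^ 2 * D (tangentForm β)) -
        27 * polyS ^ 2 * D polyS := by
  have D_polyB6 : D polyB6 = D (∏ i, polyF i) - 3 * polyS ^ 2 * D polyS := by
    simp [polyB6, D.leibniz_pow, mul_assoc]
  have D_prod := congrArg D (prod_polyF_eq h)
  simp only [D.leibniz, D.leibniz_pow, derivation_ofNat, map_sub, map_add, smul_eq_mul,
    nsmul_eq_mul, Nat.cast_ofNat, Nat.add_one_sub_one, pow_one, mul_zero, add_zero] at D_prod
  have three_ne_zero : (3 : MvPolynomial (Fin 4) ℂ) ≠ 0 := by norm_num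
  refine mul_left_cancel₀ three_ne_zero ?_
  linear_combination D_prod + 27 * D_polyB6

theorem tangentDerivation_polarForm (h : IsConjSixthRootPair α β) :
    tangentDerivation α β polarForm = 0 := by
  simp only [tangentDerivation, polarForm, map_add, map_sub, Derivation.leibniz, derivation_ofNat,
    mkDerivation_X, smul_eq_mul, Matrix.cons_val]
  linear_combination 2 * (h.map C).add_eq_one

theorem tangentDerivation_tangentForm_left (h : IsConjSixthRootPair α β) :
    tangentDerivation α β (tangentForm α) = 3 := by
  obtain ⟨hadd, hmul⟩ := h.map (C : ℂ →+* MvPolynomial (Fin 4) ℂ)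
  simp only [tangentDerivation, tangentForm, map_add, map_sub, Derivation.leibniz,
    Derivation.leibniz_pow, derivation_C, mkDerivation_X, smul_eq_mul, Matrix.cons_val]
  grind

theorem tangentDerivation_tangentForm_right (h : IsConjSixthRootPair α β) :
    tangentDerivation α β (tangentForm β) = 0 := by
  obtain ⟨hadd, hmul⟩ := h.map (C : ℂ →+* MvPolynomial (Fin 4) ℂ)
  simp only [tangentDerivation, tangentForm, map_add, map_sub, Derivation.leibniz,
    Derivation.leibniz_pow, derivation_C, mkDerivation_X, smul_eq_mul, Matrix.cons_val]
  grind

theorem tangentDerivation_polyS (h : IsConjSixthRootPair α β) :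
    tangentDerivation α β polyS = -tangentForm β := by
  obtain ⟨hadd, hmul⟩ := h.map (C : ℂ →+* MvPolynomial (Fin 4) ℂ)
  simp only [tangentDerivation, polyS, tangentForm, map_sub, Derivation.leibniz, mkDerivation_X,
    smul_eq_mul, Matrix.cons_val]
  grind

theorem tangentDerivation_polyB6 (h : IsConjSixthRootPair α β) :
    3 * tangentDerivation α β polyB6 =
      9 * polyS ^ 2 * tangentForm β -
        2 * polarForm ^ 2 * (polarForm ^ 2 - 3 * (tangentForm α * tangentForm β)) * tangentForm β -
        2 * tangentForm α ^ 2 * (tangentForm α ^ 3 + tangentForm β ^ 3) := by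
  have hD := derivation_polyB6 (tangentDerivation α β) h
  rw [tangentDerivation_polarForm h, tangentDerivation_tangentForm_left h,
    tangentDerivation_tangentForm_right h, tangentDerivation_polyS h] at hD
  have three_ne_zero : (3 : MvPolynomial (Fin 4) ℂ) ≠ 0 := by norm_num
  refine mul_left_cancel₀ three_ne_zero ?_
  linear_combination hD

theorem polarDerivation_polarForm : polarDerivation polarForm = 6 := by
  simp only [polarDerivation, polarForm, map_add, map_sub, Derivation.leibniz, derivation_ofNat,
    mkDerivation_X, smul_eq_mul, Matrix.cons_val]
  norm_num

theorem polarDerivation_tangentForm (h : IsConjSixthRootPair α β) :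
    polarDerivation (tangentForm α) = 0 := by
  obtain ⟨hadd, hmul⟩ := h.map (C : ℂ →+* MvPolynomial (Fin 4) ℂ)
  simp only [polarDerivation, tangentForm, map_add, map_sub, Derivation.leibniz,
    Derivation.leibniz_pow, derivation_C, mkDerivation_X, smul_eq_mul, Matrix.cons_val]
  grind

theorem polarDerivation_polyS : polarDerivation polyS = polarForm := by
  simp only [polarDerivation, polyS, polarForm, map_sub, Derivation.leibniz, mkDerivation_X,
    smul_eq_mul, Matrix.cons_val]
  ring

theorem polarDerivation_polyB6 (h : IsConjSixthRootPair α β) :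
    3 * polarDerivation polyB6 =
      polarForm * (4 * (polarForm ^ 2 - 3 * (tangentForm α * tangentForm β)) *
        (polarForm ^ 2 - tangentForm α * tangentForm β) - 9 * polyS ^ 2) := by
  have hD := derivation_polyB6 polarDerivation h
  rw [polarDerivation_polarForm, polarDerivation_tangentForm h, polarDerivation_tangentForm h.symm,
    polarDerivation_polyS] at hD
  have three_ne_zero : (3 : MvPolynomial (Fin 4) ℂ) ≠ 0 := by norm_num
  refine mul_left_cancel₀ three_ne_zero ?_
  linear_combination hD

end HexagonCoordinates

theorem polyS_sq_mul_sub_mem_jacobianIdeal :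
    polyS ^ 2 * (X 2 - X 3) ∈ jacobianIdeal polyB6 := by
  set D : Derivation ℂ (MvPolynomial (Fin 4) ℂ) (MvPolynomial (Fin 4) ℂ) :=
    mkDerivation ℂ ![0, 0, -1, 1]
  have D_prod : D (∏ i, polyF i) = 0 := by
    simp [D, Fin.prod_univ_six, polyF, Derivation.leibniz, derivation_ofNat]
  have D_polyS : D polyS = X 3 - X 2 := by
    simp only [D, polyS, map_sub, Derivation.leibniz, mkDerivation_X, smul_eq_mul, Matrix.cons_val]
    ring
  have D_polyB6 : D polyB6 = ((3 : ℕ) : MvPolynomial (Fin 4) ℂ) * (polyS ^ 2 * (X 2 - X 3)) := by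
    simp only [polyB6, map_sub, D_prod, D.leibniz_pow, D_polyS, smul_eq_mul, nsmul_eq_mul,
      Nat.cast_ofNat, Nat.add_one_sub_one]
    ring
  exact mem_of_natCast_mul_mem three_ne_zero (D_polyB6 ▸ derivation_mem_jacobianIdeal D)

theorem polyS_pow_seven_mem_span_sup_jacobianIdeal :
    polyS ^ 7 ∈ Ideal.span {X 2 - X 3} ⊔ jacobianIdeal polyB6 := by
  obtain ⟨α, β, h⟩ := exists_isConjSixthRootPair
  set I := Ideal.span {X 2 - X 3} ⊔ jacobianIdeal polyB6
  set π := Ideal.Quotient.mk I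
  have hD (D : Derivation ℂ (MvPolynomial (Fin 4) ℂ) (MvPolynomial (Fin 4) ℂ)) :
      π (D polyB6) = 0 :=
    Ideal.Quotient.eq_zero_iff_mem.2 (Ideal.mem_sup_right (derivation_mem_jacobianIdeal D))
  have hd : π (X 2) - π (X 3) = 0 := by
    rw [← map_sub]
    exact Ideal.Quotient.eq_zero_iff_mem.2
      (Ideal.mem_sup_left (Ideal.mem_span_singleton_self _))
  have hS := congrArg π (polyS_eq h)
  have hα := congrArg π (tangentDerivation_polyB6 h)
  have hβ := congrArg π (tangentDerivation_polyB6 h.symm)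
  have hv := congrArg π (polarDerivation_polyB6 h)
  simp only [map_mul, map_sub, map_add, map_pow, map_ofNat, hD, hd] at hS hα hβ hv
  set v := π polarForm
  set p := π (tangentForm α)
  set r := π (tangentForm β)
  have sq_S : 144 * π polyS ^ 2 = (v ^ 2 - 4 * (p * r)) ^ 2 := by
    linear_combination (12 * π polyS + v ^ 2 - 4 * (p * r)) * hS
  have pow_seven := mul_sq_sub_pow_seven_eq_zero (p := p) (r := r) (v := v)
    (by linear_combination 16 * hα + r * sq_S)
    (by linear_combination 16 * hβ + p * sq_S)
    (by linear_combination -16 * hv + v * sq_S)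
  refine mem_of_natCast_mul_mem (n := 1071 * 12 ^ 7) (by norm_num)
    (Ideal.Quotient.eq_zero_iff_mem.1 ?_)
  calc
    π ((1071 * 12 ^ 7 : ℕ) * polyS ^ 7) = 1071 * (12 * π polyS) ^ 7 := by
      push_cast
      simp only [map_mul, map_pow, map_ofNat]
      ring
    _ = 1071 * (v ^ 2 - 4 * (p * r)) ^ 7 := by rw [hS]; ring
    _ = 0 := pow_seven

theorem polyS_pow_nine_mem_jacobianIdeal : polyS ^ 9 ∈ jacobianIdeal polyB6 := by
  rw [show polyS ^ 9 = polyS ^ 2 * polyS ^ 7 by ring]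
  exact mul_mem_of_mem_span_singleton_sup polyS_pow_seven_mem_span_sup_jacobianIdeal
    polyS_sq_mul_sub_mem_jacobianIdeal

/-- `S¹⁰` belongs to the Jacobian ideal of `B₆`; in particular every nonzero
`x ∈ ℂ⁴` at which all four partial derivatives of `B₆` vanish satisfies `S(x) = 0`. -/
theorem S_pow_ten_mem_jacobian_ideal :
    polyS ^ 10 ∈ Ideal.span (Set.range fun i : Fin 4 => pderiv i polyB6) ∧
    ∀ x : Fin 4 → ℂ, x ≠ 0 → (∀ i : Fin 4, eval x (pderiv i polyB6) = 0) →
      eval x polyS = 0 := by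
  have hmem : polyS ^ 10 ∈ jacobianIdeal polyB6 :=
    Ideal.pow_mem_of_pow_mem _ polyS_pow_nine_mem_jacobianIdeal (by norm_num)
  refine ⟨hmem, fun x _ hx => ?_⟩
  have eval_pow_eq_zero := eval_eq_zero_of_mem_jacobianIdeal hx hmem
  rw [map_pow] at eval_pow_eq_zero
  exact eq_zero_of_pow_eq_zero eval_pow_eq_zero
end

section
/- The set of singular points of the sextic surface B₆ = 0 in ℙ³(ℂ) equals the union over all pairs 1 ≤ i < j ≤ 6 of the sets {[x] ∈ ℙ³(ℂ) : Fᵢ(x) = Fⱼ(x) = S(x) = 0}, and this set has exactly 30 elements. -/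
open MvPolynomial

/-- The set of singular points of the surface `B₆ = 0` in `ℙ³(ℂ)`. -/
def singB6 : Set (Projectivization ℂ (Fin 4 → ℂ)) :=
  {p | ∃ (x : Fin 4 → ℂ) (hx : x ≠ 0), Projectivization.mk ℂ x hx = p ∧
      ∀ i : Fin 4, eval x (pderiv i polyB6) = 0}

/-!
The planes `Fᵢ = 0` are tangent to the quadric `S = 0`. Under the Segre map `(p, q) ↦ p ⊗ q` the
form `Fᵢ` pulls back to `[p, nᵢ] [q, nᵢ]` for six points `nᵢ` of `ℙ¹`. On the quadric the gradient
of `B₆` is that of `∏ Fᵢ`, which vanishes exactly where two of the `Fᵢ` do, and there the unordered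
pair `{nᵢ, nⱼ}` gives the two points `nᵢ ⊗ nⱼ` and `nⱼ ⊗ nᵢ`, whence `6 · 5 = 30` points.

Off the quadric there are no singular points. The `nᵢ` form the vertices of a regular hexagon:
in the coordinates `u, v, c, w` of `hexParam`, with `n = u² + 3v²` and `e = u(u² - 9v²)`, the sextic
becomes, up to a constant, `4c²(4c² - 3n)² - 4e² - (3w² + c² - n)³`. There `∂_w = 0` gives `w = 0`,
and since `n` is invariant under the rotation `u ∂ᵥ - 3v ∂ᵤ`, a singular point lies on a mirror of
the hexagon, that is, `e² = 0` or `e² = n³`. The equations `∂_c = 0` and `u ∂ᵤ + v ∂ᵥ = 0` then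
become, up to a factor `c`, coprime binary forms in `c²` and `n`, which leaves only the origin.
-/

section CriticalPoints

variable {R σ τ ι : Type*} [CommRing R]

/-- The point `x` is a critical point of the polynomial `φ`: its gradient vanishes there. For a
homogeneous form this is the condition defining singular points of the hypersurface `φ = 0`. -/
def IsCriticalPoint (φ : MvPolynomial σ R) (x : σ → R) : Prop :=
  ∀ i, eval x (pderiv i φ) = 0

theorem pderiv_ofNat (i : σ) (n : ℕ) [n.AtLeastTwo] :
    pderiv i (ofNat(n) : MvPolynomial σ R) = 0 :=
  (pderiv i).map_natCast n

theorem pderiv_bind₁ [Fintype σ] (f : σ → MvPolynomial τ R) (φ : MvPolynomial σ R) (j : τ) :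
    pderiv j (bind₁ f φ) = ∑ i, bind₁ f (pderiv i φ) * pderiv j (f i) := by
  classical
  induction φ using MvPolynomial.induction_on with
  | C a => simp
  | add p q hp hq => simp only [map_add, hp, hq, add_mul, Finset.sum_add_distrib]
  | mul_X p k hp =>
    simp only [map_mul, map_add, bind₁_X_right, pderiv_mul, pderiv_X, hp, add_mul,
      Finset.sum_add_distrib, Finset.sum_mul]
    congr 1
    · exact Finset.sum_congr rfl fun i _ => by ring
    · simp [Pi.single_apply, apply_ite]

theorem IsCriticalPoint.comp_bind₁ [Finite σ] {f : σ → MvPolynomial τ R} {φ : MvPolynomial σ R}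
    {y : τ → R} (h : IsCriticalPoint φ fun i => eval y (f i)) :
    IsCriticalPoint (bind₁ f φ) y := by
  have := Fintype.ofFinite σ
  intro j
  rw [pderiv_bind₁, map_sum]
  refine Finset.sum_eq_zero fun i _ => ?_
  rw [map_mul, ← aeval_eq_eval, aeval_bind₁, aeval_eq_eval]
  exact mul_eq_zero_of_left (h i) _

theorem IsCriticalPoint.eval_eq_zero [IsDomain R] [CharZero R] [Finite σ]
    {φ : MvPolynomial σ R} {x : σ → R} {n : ℕ} (h : IsCriticalPoint φ x)
    (hφ : φ.IsHomogeneous n) (hn : n ≠ 0) : eval x φ = 0 := by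
  have := Fintype.ofFinite σ
  have euler : eval x (n • φ) = 0 := by
    rw [← hφ.sum_X_mul_pderiv, map_sum]
    exact Finset.sum_eq_zero fun i _ => by rw [map_mul, h i, mul_zero]
  simpa [hn] using euler

variable [Fintype ι] {F : ι → MvPolynomial σ R} {S : MvPolynomial σ R}
  {x : σ → R} {n : ℕ} {i : ι}

theorem eval_pderiv_prod_sub_pow [DecidableEq ι] (hn : 2 ≤ n) (hS : eval x S = 0)
    (hi : eval x (F i) = 0) (m : σ) :
    eval x (pderiv m (∏ j, F j - S ^ n)) =
      (∏ j ∈ Finset.univ.erase i, eval x (F j)) * eval x (pderiv m (F i)) := by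
  rw [← Finset.mul_prod_erase _ F (Finset.mem_univ i)]
  simp [map_prod, hi, hS, show n - 1 ≠ 0 by lia]

theorem isCriticalPoint_prod_sub_pow_iff [IsDomain R] (hn : 2 ≤ n) (hS : eval x S = 0)
    (hi : eval x (F i) = 0) (hFi : ¬ IsCriticalPoint (F i) x) :
    IsCriticalPoint (∏ j, F j - S ^ n) x ↔ ∃ j, j ≠ i ∧ eval x (F j) = 0 := by
  classical
  obtain ⟨m, hm⟩ := not_forall.1 hFi
  have prod_eq_zero_iff :
      ∏ j ∈ Finset.univ.erase i, eval x (F j) = 0 ↔ ∃ j, j ≠ i ∧ eval x (F j) = 0 := by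
    simp [Finset.prod_eq_zero_iff]
  simp only [IsCriticalPoint, eval_pderiv_prod_sub_pow hn hS hi, ← prod_eq_zero_iff]
  exact ⟨fun h => (mul_eq_zero.1 (h m)).resolve_right hm, fun h k => mul_eq_zero_of_left h _⟩

end CriticalPoints

section Hexagon

/-- The sextic `B₆` in coordinates `u, v, c, w` that display the symmetry of the hexagon: up to a
factor, `c(4c² - 3n) ± u(u² - 9v²)` are the products of the alternate `Fᵢ`, and `3w² + c² - n` is
`S`, where `n = u² + 3v²`. -/
noncomputable def hexSextic (R : Type*) [CommRing R] : MvPolynomial (Fin 4) R :=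
  4 * (X 2 * (4 * X 2 ^ 2 - 3 * (X 0 ^ 2 + 3 * X 1 ^ 2))) ^ 2
    - 4 * (X 0 * (X 0 ^ 2 - 9 * X 1 ^ 2)) ^ 2
    - (3 * X 3 ^ 2 + X 2 ^ 2 - (X 0 ^ 2 + 3 * X 1 ^ 2)) ^ 3

theorem eval_pderiv_hexSextic {R : Type*} [CommRing R] (y : Fin 4 → R) (i : Fin 4) :
    eval y (pderiv i (hexSextic R)) =
      let n := y 0 ^ 2 + 3 * y 1 ^ 2
      let t := y 2 * (4 * y 2 ^ 2 - 3 * n)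
      let e := y 0 * (y 0 ^ 2 - 9 * y 1 ^ 2)
      let q := 3 * y 3 ^ 2 + y 2 ^ 2 - n
      ![6 * y 0 * (q ^ 2 - 8 * t * y 2) - 24 * e * (y 0 ^ 2 - 3 * y 1 ^ 2),
        18 * y 1 * (q ^ 2 - 8 * t * y 2) + 144 * e * y 0 * y 1,
        24 * t * (4 * y 2 ^ 2 - n) - 6 * y 2 * q ^ 2,
        -18 * y 3 * q ^ 2] i := by
  fin_cases i <;> simp [hexSextic, pderiv_X, pderiv_ofNat] <;> ring

variable {K : Type*} [Field K] [CharZero K]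

theorem eq_zero_of_hexagonal_mirror {u v : K} (hn : u ^ 2 + 3 * v ^ 2 = 0)
    (hmirror : u * (u ^ 2 - 9 * v ^ 2) * (v * (u ^ 2 - v ^ 2)) = 0) : u = 0 ∧ v = 0 := by
  have huv : u * v = 0 := by
    have : (u * v) ^ 3 = 0 := by
      linear_combination (1 / 16) * (u * v * (u ^ 2 + 3 * v ^ 2) * hn - hmirror)
    exact pow_eq_zero_iff three_ne_zero |>.1 this
  rcases mul_eq_zero.1 huv with rfl | rfl <;> simpa using hn

theorem eq_zero_of_hexagonal_equations {u v c n : K} (hn : n = u ^ 2 + 3 * v ^ 2)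
    (hmirror : u * (u ^ 2 - 9 * v ^ 2) * (v * (u ^ 2 - v ^ 2)) = 0)
    (hradial : 31 * c ^ 4 * n - 22 * c ^ 2 * n ^ 2 - n ^ 3
      + 4 * (u * (u ^ 2 - 9 * v ^ 2)) ^ 2 = 0)
    (haxial : c * (63 * c ^ 4 - 62 * c ^ 2 * n + 11 * n ^ 2) = 0) :
    u = 0 ∧ v = 0 ∧ c = 0 := by
  have norm_cube : n ^ 3 = (u * (u ^ 2 - 9 * v ^ 2)) ^ 2 + 27 * (v * (u ^ 2 - v ^ 2)) ^ 2 := by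
    rw [hn]; ring
  -- Bézout coefficients for the two equations, seen as coprime forms in `c ^ 2` and `n`.
  have n_pow : n ^ 5 = 0 := by
    rcases mul_eq_zero.1 hmirror with he | hd
    · rw [he] at hradial
      linear_combination
        (-n ^ 2 + 726 / 17 * n * c ^ 2 - 11529 / 68 * c ^ 4) * hradial
          + (32 / 17 * n ^ 2 + 5673 / 68 * n * c ^ 2) * c * haxial
    · rw [hd] at norm_cube
      linear_combination
        (1 / 3 * n ^ 2 - 14069 / 864 * n * c ^ 2 + 2065 / 96 * c ^ 4)
          * (hradial + 4 * norm_cube)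
          + (1471 / 288 * n ^ 2 - 9145 / 864 * n * c ^ 2) * c * haxial
  have n_eq : n = 0 := eq_zero_of_pow_eq_zero n_pow
  obtain ⟨hu, hv⟩ := eq_zero_of_hexagonal_mirror (hn.symm.trans n_eq) hmirror
  exact ⟨hu, hv, by simpa [n_eq] using haxial⟩

theorem IsCriticalPoint.eq_zero_of_hexSextic {y : Fin 4 → K} (h : IsCriticalPoint (hexSextic K) y)
    (hq : 3 * y 3 ^ 2 + y 2 ^ 2 - (y 0 ^ 2 + 3 * y 1 ^ 2) ≠ 0) : y = 0 := by
  simp only [IsCriticalPoint, eval_pderiv_hexSextic, Fin.forall_fin_succ] at h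
  obtain ⟨hu, hv, hc, hw, -⟩ := h
  have w_eq : y 3 = 0 := by simpa [hq] using hw
  simp only [w_eq, Matrix.cons_val_zero, Matrix.cons_val_one, Matrix.cons_val,
    Fin.succ_zero_eq_one, Fin.succ_one_eq_two] at hu hv hc
  obtain ⟨hu, hv, hc⟩ := eq_zero_of_hexagonal_equations (u := y 0) (v := y 1) (c := y 2) rfl
    (by linear_combination (y 0 * hv - 3 * y 1 * hu) / 216)
    (by linear_combination -(y 0 * hu + y 1 * hv) / 6)
    (by linear_combination hc / 6)
  ext i
  fin_cases i <;> assumption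

end Hexagon

section Segre

variable {K : Type*} [Field K]

/-- The determinant `[p, q]` of two vectors of `K²`, vanishing when they span the same point of
`ℙ¹`. -/
def bracket (p q : Fin 2 → K) : K := p 0 * q 1 - p 1 * q 0

theorem bracket_self (p : Fin 2 → K) : bracket p p = 0 := by
  unfold bracket; ring

/-- The Segre map `ℙ¹ × ℙ¹ → ℙ³` in homogeneous coordinates, parametrizing the quadric
`y₀y₁ = y₂y₃`. -/
def segre (p q : Fin 2 → K) : Fin 4 → K := ![p 0 * q 0, p 1 * q 1, p 0 * q 1, p 1 * q 0]

theorem exists_eq_smul_of_bracket_eq_zero {p n : Fin 2 → K} (hn : n ≠ 0) (h : bracket p n = 0) :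
    ∃ r : K, p = r • n := by
  have cross : ∀ k l : Fin 2, p l * n k = p k * n l := by
    have swap : p 0 * n 1 = p 1 * n 0 := sub_eq_zero.1 h
    simp only [Fin.forall_fin_two, swap, and_self]
  obtain ⟨k, hk⟩ := Function.ne_iff.1 hn
  refine ⟨p k / n k, funext fun l => ?_⟩
  rw [Pi.smul_apply, smul_eq_mul, div_mul_eq_mul_div]
  exact eq_div_of_mul_eq hk (cross k l)

theorem eq_zero_of_bracket_eq_zero {p m n : Fin 2 → K} (hmn : bracket m n ≠ 0)
    (hm : bracket p m = 0) (hn : bracket p n = 0) : p = 0 := by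
  unfold bracket at *
  have hp0 : p 0 = 0 := mul_left_cancel₀ hmn (by linear_combination m 0 * hn - n 0 * hm)
  have hp1 : p 1 = 0 := mul_left_cancel₀ hmn (by linear_combination m 1 * hn - n 1 * hm)
  ext k
  fin_cases k <;> assumption

theorem segre_smul_smul (r s : K) (p q : Fin 2 → K) :
    segre (r • p) (s • q) = (r * s) • segre p q := by
  ext k; fin_cases k <;> simp [segre] <;> ring

theorem segre_ne_zero {p q : Fin 2 → K} (hp : p ≠ 0) (hq : q ≠ 0) : segre p q ≠ 0 := by
  obtain ⟨k, hk⟩ := Function.ne_iff.1 hp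
  obtain ⟨l, hl⟩ := Function.ne_iff.1 hq
  intro h
  have entry_eq_zero (k l : Fin 2) : p k * q l = 0 := by
    fin_cases k <;> fin_cases l
    exacts [congrFun h 0, congrFun h 2, congrFun h 3, congrFun h 1]
  exact mul_ne_zero hk hl (entry_eq_zero k l)

theorem ne_zero_of_segre_ne_zero {p q : Fin 2 → K} (h : segre p q ≠ 0) : p ≠ 0 ∧ q ≠ 0 := by
  constructor <;> rintro rfl <;> exact h (by ext k; fin_cases k <;> simp [segre])

theorem exists_segre_eq {x : Fin 4 → K} (h : x 0 * x 1 - x 2 * x 3 = 0) :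
    ∃ p q, segre p q = x := by
  rcases eq_or_ne (x 0) 0 with h0 | h0
  · rcases mul_eq_zero.1 (by linear_combination x 1 * h0 - h : x 2 * x 3 = 0) with h2 | h3
    · refine ⟨![0, 1], ![x 3, x 1], ?_⟩
      ext k; fin_cases k <;> simp [segre, h0, h2]
    · refine ⟨![x 2, x 1], ![0, 1], ?_⟩
      ext k; fin_cases k <;> simp [segre, h0, h3]
  · have h1 : x 3 * (x 2 / x 0) = x 1 := by
      field_simp
      linear_combination -h
    refine ⟨![x 0, x 3], ![1, x 2 / x 0], ?_⟩
    ext k; fin_cases k <;> simp [segre, h1, mul_div_cancel₀, h0]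

theorem bracket_eq_zero_of_segre_eq_smul {p q m n : Fin 2 → K} (hp : p ≠ 0) (hq : q ≠ 0) {r : K}
    (h : segre p q = r • segre m n) : bracket p m = 0 ∧ bracket q n = 0 := by
  have h0 : p 0 * q 0 = r * (m 0 * n 0) := congrFun h 0
  have h1 : p 1 * q 1 = r * (m 1 * n 1) := congrFun h 1
  have h2 : p 0 * q 1 = r * (m 0 * n 1) := congrFun h 2
  have h3 : p 1 * q 0 = r * (m 1 * n 0) := congrFun h 3
  have hq_smul : bracket p m • q = 0 := by
    ext k
    fin_cases k <;>
      simp only [bracket, Pi.smul_apply, smul_eq_mul, Pi.zero_apply, Fin.zero_eta, Fin.mk_one]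
    · linear_combination m 1 * h0 - m 0 * h3
    · linear_combination m 1 * h2 - m 0 * h1
  have hp_smul : bracket q n • p = 0 := by
    ext k
    fin_cases k <;>
      simp only [bracket, Pi.smul_apply, smul_eq_mul, Pi.zero_apply, Fin.zero_eta, Fin.mk_one]
    · linear_combination n 1 * h0 - n 0 * h2
    · linear_combination n 1 * h3 - n 0 * h1
  exact ⟨(smul_eq_zero.1 hq_smul).resolve_right hq, (smul_eq_zero.1 hp_smul).resolve_right hp⟩

theorem mk_segre_eq_mk_segre_iff {p q m n : Fin 2 → K} (hp : p ≠ 0) (hq : q ≠ 0) (hm : m ≠ 0)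
    (hn : n ≠ 0) :
    Projectivization.mk K (segre p q) (segre_ne_zero hp hq) =
        Projectivization.mk K (segre m n) (segre_ne_zero hm hn) ↔
      bracket p m = 0 ∧ bracket q n = 0 := by
  rw [Projectivization.mk_eq_mk_iff']
  constructor
  · rintro ⟨r, hr⟩
    exact bracket_eq_zero_of_segre_eq_smul hp hq hr.symm
  · rintro ⟨hpm, hqn⟩
    obtain ⟨r, rfl⟩ := exists_eq_smul_of_bracket_eq_zero hm hpm
    obtain ⟨s, rfl⟩ := exists_eq_smul_of_bracket_eq_zero hn hqn
    exact ⟨r * s, (segre_smul_smul r s m n).symm⟩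

theorem bracket_mul_bracket_eq_zero_iff {p q m n : Fin 2 → K} (hp : p ≠ 0) (hq : q ≠ 0)
    (hmn : bracket m n ≠ 0) :
    bracket p m * bracket q m = 0 ∧ bracket p n * bracket q n = 0 ↔
      (bracket p m = 0 ∧ bracket q n = 0) ∨ (bracket p n = 0 ∧ bracket q m = 0) := by
  have hpmn : ¬ (bracket p m = 0 ∧ bracket p n = 0) :=
    fun h => hp (eq_zero_of_bracket_eq_zero hmn h.1 h.2)
  have hqmn : ¬ (bracket q m = 0 ∧ bracket q n = 0) :=
    fun h => hq (eq_zero_of_bracket_eq_zero hmn h.1 h.2)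
  simp only [mul_eq_zero]
  tauto

end Segre

/-- The substitution `(u, v, c, w) ↦ y` expressing `y₀, …, y₃` in the coordinates of
`hexSextic`. -/
noncomputable def hexParam : Fin 4 → MvPolynomial (Fin 4) ℂ :=
  ![2 * X 2 - X 0 - 3 * X 1, 2 * X 2 - X 0 + 3 * X 1,
    X 2 - 2 * X 0 + 3 * X 3, X 2 - 2 * X 0 - 3 * X 3]

theorem bind₁_hexParam_polyB6 : bind₁ hexParam polyB6 = 27 * hexSextic ℂ := by
  simp [polyB6, polyF, polyS, hexParam, hexSextic, Fin.prod_univ_six, map_ofNat]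
  ring

theorem isHomogeneous_polyF (i : Fin 6) : (polyF i).IsHomogeneous 1 := by
  have hX := isHomogeneous_X (σ := Fin 4) ℂ
  have hCX (n : ℕ) [n.AtLeastTwo] (k : Fin 4) :
      (ofNat(n) * X k : MvPolynomial (Fin 4) ℂ).IsHomogeneous 1 :=
    isHomogeneous_C_mul_X (OfNat.ofNat n : ℂ) k
  fin_cases i
  · exact hX 0
  · exact hX 1
  · exact (((hCX 4 0).sub (hCX 2 2)).sub (hCX 2 3)).add (hX 1)
  · exact (((hX 0).sub (hCX 2 2)).sub (hCX 2 3)).add (hCX 4 1)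
  · exact (((hX 0).add (hX 2)).add (hX 3)).add (hX 1)
  · exact (((hX 0).sub (hX 2)).sub (hX 3)).add (hX 1)

theorem isHomogeneous_polyS : polyS.IsHomogeneous 2 :=
  ((isHomogeneous_X ℂ 0).mul (isHomogeneous_X ℂ 1)).sub
    ((isHomogeneous_X ℂ 2).mul (isHomogeneous_X ℂ 3))

theorem isHomogeneous_polyB6 : polyB6.IsHomogeneous 6 := by
  have hprod : (∏ i, polyF i).IsHomogeneous 6 := by
    simpa using IsHomogeneous.prod Finset.univ polyF _ fun i _ => isHomogeneous_polyF i
  exact hprod.sub (isHomogeneous_polyS.pow 3)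

theorem eval_polyS (x : Fin 4 → ℂ) : eval x polyS = x 0 * x 1 - x 2 * x 3 := by
  simp [polyS]

theorem not_isCriticalPoint_polyF (i : Fin 6) (x : Fin 4 → ℂ) :
    ¬ IsCriticalPoint (polyF i) x := by
  intro h
  have h0 := h 0
  have h1 := h 1
  fin_cases i <;> simp [polyF, pderiv_X, pderiv_ofNat] at h0 h1

theorem IsCriticalPoint.eval_polyS_eq_zero {x : Fin 4 → ℂ} (h : IsCriticalPoint polyB6 x) :
    eval x polyS = 0 := by
  by_contra hS
  let y : Fin 4 → ℂ := (1 / 6 : ℂ) • ![x 0 + x 1 - 2 * (x 2 + x 3), x 1 - x 0,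
    2 * (x 0 + x 1) - (x 2 + x 3), x 2 - x 3]
  have hy : (fun i => eval y (hexParam i)) = x := by
    ext i; fin_cases i <;> simp [hexParam, y] <;> ring
  have hcrit : IsCriticalPoint (hexSextic ℂ) y := by
    intro i
    have := IsCriticalPoint.comp_bind₁ (hy.symm ▸ h) i
    simpa [bind₁_hexParam_polyB6, pderiv_ofNat] using this
  have hquadric : 3 * (3 * y 3 ^ 2 + y 2 ^ 2 - (y 0 ^ 2 + 3 * y 1 ^ 2)) = eval x polyS := by
    simp [y, eval_polyS]; ring
  have y_eq_zero : y = 0 := hcrit.eq_zero_of_hexSextic (right_ne_zero_of_mul (hquadric ▸ hS))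
  apply hS
  simp [← hquadric, y_eq_zero]

theorem isCriticalPoint_polyB6_iff {x : Fin 4 → ℂ} :
    IsCriticalPoint polyB6 x ↔
      ∃ i j, i < j ∧ eval x (polyF i) = 0 ∧ eval x (polyF j) = 0 ∧ eval x polyS = 0 := by
  have polyB6_iff {i : Fin 6} (hS : eval x polyS = 0) (hi : eval x (polyF i) = 0) :=
    isCriticalPoint_prod_sub_pow_iff (n := 3) (by norm_num) hS hi (not_isCriticalPoint_polyF i x)
  constructor
  · intro h
    have hS := h.eval_polyS_eq_zero
    have hprod : ∏ i, eval x (polyF i) = 0 := by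
      simpa [polyB6, hS, map_prod] using h.eval_eq_zero isHomogeneous_polyB6 (by norm_num)
    obtain ⟨i, -, hi⟩ := Finset.prod_eq_zero_iff.1 hprod
    obtain ⟨j, hji, hj⟩ := (polyB6_iff hS hi).1 h
    rcases lt_or_gt_of_ne hji with hlt | hlt
    · exact ⟨j, i, hlt, hj, hi, hS⟩
    · exact ⟨i, j, hlt, hi, hj, hS⟩
  · rintro ⟨i, j, hij, hi, hj, hS⟩
    exact (polyB6_iff hS hi).2 ⟨j, hij.ne', hj⟩

/-- Homogeneous coordinates `nᵢ` of the six points of `ℙ¹` such that `Fᵢ = 0` is the tangent plane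
to the quadric at `nᵢ ⊗ nᵢ`. -/
def node : Fin 6 → Fin 2 → ℂ :=
  ![![0, 1], ![1, 0], ![1, 2], ![2, 1], ![1, -1], ![1, 1]]

theorem bracket_node_ne_zero {i j : Fin 6} (hij : i ≠ j) : bracket (node i) (node j) ≠ 0 := by
  fin_cases i <;> fin_cases j <;> first | exact absurd rfl hij | norm_num [bracket, node]

theorem eval_segre_polyF (i : Fin 6) (p q : Fin 2 → ℂ) :
    eval (segre p q) (polyF i) = bracket p (node i) * bracket q (node i) := by
  fin_cases i <;> simp [polyF, segre, bracket, node] <;> ring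

theorem node_ne_zero (i : Fin 6) : node i ≠ 0 := by
  fin_cases i <;> simp [node]

theorem bracket_node_eq_zero_iff {i j : Fin 6} : bracket (node i) (node j) = 0 ↔ i = j :=
  ⟨fun h => by_contra fun hij => bracket_node_ne_zero hij h, fun h => h ▸ bracket_self _⟩

/-- The point `nᵢ ⊗ nⱼ` of the quadric, for `k = (i, j)`. -/
noncomputable def nodePoint (k : Fin 6 × Fin 6) : Projectivization ℂ (Fin 4 → ℂ) :=
  Projectivization.mk ℂ (segre (node k.1) (node k.2))
    (segre_ne_zero (node_ne_zero k.1) (node_ne_zero k.2))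

theorem nodePoint_injective : Function.Injective nodePoint := by
  intro k l h
  rw [nodePoint, nodePoint, mk_segre_eq_mk_segre_iff (node_ne_zero _) (node_ne_zero _)
    (node_ne_zero _) (node_ne_zero _)] at h
  exact Prod.ext (bracket_node_eq_zero_iff.1 h.1) (bracket_node_eq_zero_iff.1 h.2)

/-- The locus `Fᵢ = Fⱼ = S = 0` in `ℙ³(ℂ)`. -/
def pairLocus (i j : Fin 6) : Set (Projectivization ℂ (Fin 4 → ℂ)) :=
  {p | ∃ (x : Fin 4 → ℂ) (hx : x ≠ 0), Projectivization.mk ℂ x hx = p ∧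
    eval x (polyF i) = 0 ∧ eval x (polyF j) = 0 ∧ eval x polyS = 0}

theorem singB6_eq_iUnion_pairLocus : singB6 = ⋃ (i) (j) (_ : i < j), pairLocus i j := by
  ext P
  simp only [Set.mem_iUnion]
  constructor
  · rintro ⟨x, hx, rfl, h⟩
    obtain ⟨i, j, hij, hF⟩ := isCriticalPoint_polyB6_iff.1 h
    exact ⟨i, j, hij, x, hx, rfl, hF⟩
  · rintro ⟨i, j, hij, x, hx, rfl, hF⟩
    exact ⟨x, hx, rfl, isCriticalPoint_polyB6_iff.2 ⟨i, j, hij, hF⟩⟩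

theorem pairLocus_eq {i j : Fin 6} (hij : i ≠ j) :
    pairLocus i j = {nodePoint (i, j), nodePoint (j, i)} := by
  have mk_mem_iff {p q} (hp : p ≠ 0) (hq : q ≠ 0) :
      eval (segre p q) (polyF i) = 0 ∧ eval (segre p q) (polyF j) = 0 ↔
        Projectivization.mk ℂ (segre p q) (segre_ne_zero hp hq) ∈
          ({nodePoint (i, j), nodePoint (j, i)} : Set _) := by
    simp only [eval_segre_polyF, Set.mem_insert_iff, Set.mem_singleton_iff, nodePoint,
      mk_segre_eq_mk_segre_iff hp hq (node_ne_zero _) (node_ne_zero _),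
      bracket_mul_bracket_eq_zero_iff hp hq (bracket_node_ne_zero hij)]
  ext P
  constructor
  · rintro ⟨x, hx, rfl, hi, hj, hS⟩
    obtain ⟨p, q, rfl⟩ := exists_segre_eq (eval_polyS x ▸ hS)
    obtain ⟨hp, hq⟩ := ne_zero_of_segre_ne_zero hx
    exact (mk_mem_iff hp hq).1 ⟨hi, hj⟩
  · have nodePoint_mem (a b : Fin 6)
        (h : nodePoint (a, b) ∈ ({nodePoint (i, j), nodePoint (j, i)} : Set _)) :
        nodePoint (a, b) ∈ pairLocus i j := by
      obtain ⟨hi, hj⟩ := (mk_mem_iff (node_ne_zero a) (node_ne_zero b)).2 h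
      exact ⟨_, _, rfl, hi, hj, by simp [eval_polyS, segre]; ring⟩
    intro h
    rcases h with rfl | rfl
    · exact nodePoint_mem i j (by simp)
    · exact nodePoint_mem j i (by simp)

theorem singB6_eq_image_nodePoint :
    singB6 = nodePoint '' (Finset.univ.offDiag : Finset (Fin 6 × Fin 6)) := by
  rw [singB6_eq_iUnion_pairLocus]
  ext P
  simp only [Set.mem_iUnion, Set.mem_image, Finset.mem_coe, Finset.mem_offDiag, Finset.mem_univ,
    true_and, Prod.exists]
  constructor
  · rintro ⟨i, j, hij, hP⟩
    rw [pairLocus_eq hij.ne] at hP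
    rcases hP with rfl | rfl
    · exact ⟨i, j, hij.ne, rfl⟩
    · exact ⟨j, i, hij.ne', rfl⟩
  · rintro ⟨i, j, hij, rfl⟩
    rcases lt_or_gt_of_ne hij with hlt | hlt
    · exact ⟨i, j, hlt, by simp [pairLocus_eq hij]⟩
    · exact ⟨j, i, hlt, by simp [pairLocus_eq hij.symm]⟩

/-- The singular locus of the sextic `B₆ = 0` is exactly the union over pairs
`i < j` of the sets `{Fᵢ = Fⱼ = S = 0}`, and it consists of exactly `30` points. -/
theorem singB6_eq_union_and_card :
    singB6 = (⋃ (i : Fin 6) (j : Fin 6) (_ : i < j),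
      {p : Projectivization ℂ (Fin 4 → ℂ) |
        ∃ (x : Fin 4 → ℂ) (hx : x ≠ 0), Projectivization.mk ℂ x hx = p ∧
          eval x (polyF i) = 0 ∧ eval x (polyF j) = 0 ∧ eval x polyS = 0}) ∧
    singB6.ncard = 30 := by
  refine ⟨singB6_eq_iUnion_pairLocus, ?_⟩
  rw [singB6_eq_image_nodePoint, Set.ncard_image_of_injective _ nodePoint_injective,
    Set.ncard_coe_finset, Finset.offDiag_card, Finset.card_univ, Fintype.card_fin]
end
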